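/- Identity for the covariant derivative of a solution (Proposition 3.4(c), trivialized flat version): if (u, A) is a smooth solution of the YMH equations on U, then pointwise on U one has −D₁(D₁D₁u + D₂D₂u) + D₂(−i·F·u) = −(1/ε²)·(D₁u·conj(u))·u − i·F·D₂u + h·D₁u and −D₂(D₁D₁u + D₂D₂u) + D₁(i·F·u) = −(1/ε²)·(D₂u·conj(u))·u + i·F·D₁u + h·D₂u. (The left-hand sides are the components of the twisted Hodge Laplacian Δ_A applied to the 1-form d_Au = (D₁u, D₂u).) -/

import Mathlib

open MeasureTheory Complex

noncomputable section

/-- Partial derivative in the first coordinate direction. -/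
def pd1 {E : Type*} [NormedAddCommGroup E] [NormedSpace ℝ E] (f : ℝ × ℝ → E) (x : ℝ × ℝ) : E :=
  fderiv ℝ f x (1, 0)

/-- Partial derivative in the second coordinate direction. -/
def pd2 {E : Type*} [NormedAddCommGroup E] [NormedSpace ℝ E] (f : ℝ × ℝ → E) (x : ℝ × ℝ) : E :=
  fderiv ℝ f x (0, 1)

/-- First covariant derivative `D₁f = ∂₁f − iA₁f`. -/
def D1 (A1 : ℝ × ℝ → ℝ) (f : ℝ × ℝ → ℂ) (x : ℝ × ℝ) : ℂ :=
  pd1 f x - Complex.I * (A1 x) * f x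

/-- Second covariant derivative `D₂f = ∂₂f − iA₂f`. -/
def D2 (A2 : ℝ × ℝ → ℝ) (f : ℝ × ℝ → ℂ) (x : ℝ × ℝ) : ℂ :=
  pd2 f x - Complex.I * (A2 x) * f x

/-- Curvature function `F = ∂₁A₂ − ∂₂A₁`. -/
def curv (A1 A2 : ℝ × ℝ → ℝ) (x : ℝ × ℝ) : ℝ := pd1 A2 x - pd2 A1 x

/-- `h = (1 − |u|²)/(2ε²)`. -/
def hfun (ε : ℝ) (u : ℝ × ℝ → ℂ) (x : ℝ × ℝ) : ℝ := (1 - ‖u x‖ ^ 2) / (2 * ε ^ 2)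

/-- `σ₊ = D₁u + iD₂u`. -/
def sigP (u : ℝ × ℝ → ℂ) (A1 A2 : ℝ × ℝ → ℝ) (x : ℝ × ℝ) : ℂ :=
  D1 A1 u x + Complex.I * D2 A2 u x

/-- `σ₋ = D₁u − iD₂u`. -/
def sigM (u : ℝ × ℝ → ℂ) (A1 A2 : ℝ × ℝ → ℝ) (x : ℝ × ℝ) : ℂ :=
  D1 A1 u x - Complex.I * D2 A2 u x

/-- The Yang--Mills--Higgs energy over the fundamental domain `[0,1]²`. -/
def energy (ε : ℝ) (u : ℝ × ℝ → ℂ) (A1 A2 : ℝ × ℝ → ℝ) : ℝ :=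
  ∫ x in Set.Icc (0:ℝ) 1 ×ˢ Set.Icc (0:ℝ) 1,
    (ε ^ 2 * curv A1 A2 x ^ 2 + ‖D1 A1 u x‖ ^ 2 + ‖D2 A2 u x‖ ^ 2
      + (1 - ‖u x‖ ^ 2) ^ 2 / (4 * ε ^ 2))

/-- `ℤ²`-periodicity. -/
def Periodic2 {E : Type*} (f : ℝ × ℝ → E) : Prop :=
  ∀ x : ℝ × ℝ, f (x.1 + 1, x.2) = f x ∧ f (x.1, x.2 + 1) = f x

/-- The Yang--Mills--Higgs equations on all of `ℝ²`. -/
def IsYMH (ε : ℝ) (u : ℝ × ℝ → ℂ) (A1 A2 : ℝ × ℝ → ℝ) : Prop :=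
  (∀ x, -(D1 A1 (D1 A1 u) x + D2 A2 (D2 A2 u) x) = (hfun ε u x : ℂ) * u x) ∧
  (∀ x, ε ^ 2 * pd2 (curv A1 A2) x = ((starRingEnd ℂ) (u x) * D1 A1 u x).im) ∧
  (∀ x, ε ^ 2 * pd1 (curv A1 A2) x = -((starRingEnd ℂ) (u x) * D2 A2 u x).im)

/-- The Yang--Mills--Higgs equations on an open set `U ⊆ ℝ²`. -/
def IsYMHOn (ε : ℝ) (u : ℝ × ℝ → ℂ) (A1 A2 : ℝ × ℝ → ℝ) (U : Set (ℝ × ℝ)) : Prop :=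
  (∀ x ∈ U, -(D1 A1 (D1 A1 u) x + D2 A2 (D2 A2 u) x) = (hfun ε u x : ℂ) * u x) ∧
  (∀ x ∈ U, ε ^ 2 * pd2 (curv A1 A2) x = ((starRingEnd ℂ) (u x) * D1 A1 u x).im) ∧
  (∀ x ∈ U, ε ^ 2 * pd1 (curv A1 A2) x = -((starRingEnd ℂ) (u x) * D2 A2 u x).im)

/-- Stability: nonnegative second variation of the energy along all smooth periodic
variations of the section and the connection. -/
def Stable (ε : ℝ) (u : ℝ × ℝ → ℂ) (A1 A2 : ℝ × ℝ → ℝ) : Prop :=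
  ∀ v : ℝ × ℝ → ℂ, ∀ a1 a2 : ℝ × ℝ → ℝ,
    ContDiff ℝ (⊤ : ℕ∞) v → Periodic2 v → ContDiff ℝ (⊤ : ℕ∞) a1 → Periodic2 a1 →
    ContDiff ℝ (⊤ : ℕ∞) a2 → Periodic2 a2 →
    0 ≤ iteratedDeriv 2 (fun t : ℝ =>
      energy ε (fun x => u x + t • v x)
        (fun x => A1 x + t * a1 x) (fun x => A2 x + t * a2 x)) 0

/-!
On a solution the covariant Laplacian of `u` is `-h u`, so everything reduces to the Leibniz rule
for `h u` and `F u`. Metric compatibility gives `∂ⱼh = -Re(ū Dⱼu) / ε²`, while the remaining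
equations say that the derivatives of `F` are `± Im(ū Dⱼu) / ε²`. In each component the two
contributions are the real and imaginary parts of the single term `-(ū Dⱼu) u / ε²`.
-/

open scoped ComplexConjugate Topology

section CovariantDerivative

variable {E : Type*} [NormedAddCommGroup E] [NormedSpace ℝ E]
  {a g : E → ℝ} {f f' : E → ℂ} {v x : E}

/-- The covariant derivative `∂ᵥf - i a f` of a complex function on a normed space in the
direction `v`, where the real function `a` is the component of the connection form along `v`.
It treats `D1` and `D2` uniformly: they are its instances for the directions `(1, 0)` and
`(0, 1)`. -/
def covDeriv (a : E → ℝ) (v : E) (f : E → ℂ) (x : E) : ℂ :=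
  fderiv ℝ f x v - I * a x * f x

theorem covDeriv_congr (h : f =ᶠ[𝓝 x] f') : covDeriv a v f x = covDeriv a v f' x := by
  rw [covDeriv, covDeriv, h.fderiv_eq, h.eq_of_nhds]

theorem covDeriv_neg : covDeriv a v (fun y => -f y) x = -covDeriv a v f x := by
  simp only [covDeriv, fderiv_fun_neg, neg_apply]
  ring

theorem covDeriv_const_mul (c : ℂ) (hf : DifferentiableAt ℝ f x) :
    covDeriv a v (fun y => c * f y) x = c * covDeriv a v f x := by
  simp only [covDeriv, fderiv_const_mul hf, smul_apply, smul_eq_mul]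
  ring

theorem covDeriv_ofReal_mul (hg : DifferentiableAt ℝ g x) (hf : DifferentiableAt ℝ f x) :
    covDeriv a v (fun y => g y * f y) x = fderiv ℝ g x v * f x + g x * covDeriv a v f x := by
  simp only [covDeriv, ← real_smul, fderiv_fun_smul hg hf, add_apply,
    smul_apply, ContinuousLinearMap.smulRight_apply]
  simp only [real_smul]
  ring

theorem covDeriv_const_mul_ofReal_mul (c : ℂ) (hg : DifferentiableAt ℝ g x)
    (hf : DifferentiableAt ℝ f x) :
    covDeriv a v (fun y => c * g y * f y) x =
      c * fderiv ℝ g x v * f x + c * g x * covDeriv a v f x := by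
  have hgf : DifferentiableAt ℝ (fun y => (g y : ℂ) * f y) x :=
    (ofRealCLM.differentiableAt.comp x hg).mul hf
  simp only [mul_assoc, covDeriv_const_mul c hgf, covDeriv_ofReal_mul hg hf, mul_add]

theorem re_conj_mul_covDeriv :
    (conj (f x) * covDeriv a v f x).re = (conj (f x) * fderiv ℝ f x v).re := by
  have connection_term : conj (f x) * (I * a x * f x) = ↑(a x * normSq (f x)) * I := by
    rw [ofReal_mul, normSq_eq_conj_mul_self]
    ring
  rw [covDeriv, mul_sub, sub_re, connection_term, re_ofReal_mul, I_re, mul_zero, sub_zero]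

theorem fderiv_norm_sq_eq_re_conj_mul_covDeriv (hf : DifferentiableAt ℝ f x) :
    fderiv ℝ (fun y => ‖f y‖ ^ 2) x v = 2 * (conj (f x) * covDeriv a v f x).re := by
  rw [re_conj_mul_covDeriv, hf.hasFDerivAt.norm_sq.fderiv]
  simp only [smul_apply, ContinuousLinearMap.comp_apply, coe_innerSL_apply, Complex.inner,
    nsmul_eq_mul, Nat.cast_ofNat, mul_comm]

end CovariantDerivative

section YangMillsHiggs

variable {ε : ℝ} {U : Set (ℝ × ℝ)} {u : ℝ × ℝ → ℂ} {A1 A2 : ℝ × ℝ → ℝ} {x : ℝ × ℝ}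

theorem D1_eq_covDeriv (A1 : ℝ × ℝ → ℝ) : D1 A1 = covDeriv A1 (1, 0) := rfl

theorem D2_eq_covDeriv (A2 : ℝ × ℝ → ℝ) : D2 A2 = covDeriv A2 (0, 1) := rfl

theorem differentiableAt_curv (hA1 : ContDiffAt ℝ 2 A1 x) (hA2 : ContDiffAt ℝ 2 A2 x) :
    DifferentiableAt ℝ (curv A1 A2) x := by
  have differentiableAt_fderiv {A : ℝ × ℝ → ℝ} (hA : ContDiffAt ℝ 2 A x) :
      DifferentiableAt ℝ (fderiv ℝ A) x :=
    (hA.fderiv_right (m := 1) (by norm_num)).differentiableAt one_ne_zero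
  exact ((differentiableAt_fderiv hA2).clm_apply (differentiableAt_const _)).sub
    ((differentiableAt_fderiv hA1).clm_apply (differentiableAt_const _))

theorem differentiableAt_hfun (hu : DifferentiableAt ℝ u x) :
    DifferentiableAt ℝ (hfun ε u) x :=
  ((hu.norm_sq ℝ).const_sub 1).mul_const (2 * ε ^ 2)⁻¹

theorem fderiv_hfun (a : ℝ × ℝ → ℝ) (v : ℝ × ℝ) (hu : DifferentiableAt ℝ u x) :
    fderiv ℝ (hfun ε u) x v = -(conj (u x) * covDeriv a v u x).re / ε ^ 2 := by
  have hderiv : HasFDerivAt (hfun ε u) _ x :=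
    ((hu.norm_sq ℝ).hasFDerivAt.const_sub 1).mul_const (2 * ε ^ 2)⁻¹
  rw [hderiv.fderiv, smul_apply, neg_apply, fderiv_norm_sq_eq_re_conj_mul_covDeriv (a := a) hu,
    smul_eq_mul]
  field_simp

namespace IsYMHOn

theorem neg_covDeriv_laplacian (hYMH : IsYMHOn ε u A1 A2 U) (hU : U ∈ 𝓝 x)
    (hu : DifferentiableAt ℝ u x) (a : ℝ × ℝ → ℝ) (v : ℝ × ℝ) :
    -covDeriv a v (fun y => D1 A1 (D1 A1 u) y + D2 A2 (D2 A2 u) y) x =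
      -(1 / (ε : ℂ) ^ 2) * (conj (u x) * covDeriv a v u x).re * u x
        + hfun ε u x * covDeriv a v u x := by
  have laplacian_eq : (fun y => -(D1 A1 (D1 A1 u) y + D2 A2 (D2 A2 u) y)) =ᶠ[𝓝 x]
      fun y => hfun ε u y * u y :=
    Filter.eventually_of_mem hU hYMH.1
  rw [← covDeriv_neg, covDeriv_congr laplacian_eq,
    covDeriv_ofReal_mul (differentiableAt_hfun hu) hu, fderiv_hfun a v hu]
  push_cast
  ring

theorem pd2_curv (hYMH : IsYMHOn ε u A1 A2 U) (hε : ε ≠ 0) (hx : x ∈ U) :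
    pd2 (curv A1 A2) x = (conj (u x) * D1 A1 u x).im / ε ^ 2 :=
  eq_div_of_mul_eq (pow_ne_zero 2 hε) ((mul_comm _ _).trans (hYMH.2.1 x hx))

theorem pd1_curv (hYMH : IsYMHOn ε u A1 A2 U) (hε : ε ≠ 0) (hx : x ∈ U) :
    pd1 (curv A1 A2) x = -(conj (u x) * D2 A2 u x).im / ε ^ 2 :=
  eq_div_of_mul_eq (pow_ne_zero 2 hε) ((mul_comm _ _).trans (hYMH.2.2 x hx))

end IsYMHOn

theorem twisted_laplacian_of_dAu_general (hε : ε ≠ 0) (hU : IsOpen U)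
    (hu : ContDiffOn ℝ 2 u U) (hA1 : ContDiffOn ℝ 2 A1 U) (hA2 : ContDiffOn ℝ 2 A2 U)
    (hYMH : IsYMHOn ε u A1 A2 U) (hx : x ∈ U) :
    (-(D1 A1 (fun y => D1 A1 (D1 A1 u) y + D2 A2 (D2 A2 u) y) x)
        + D2 A2 (fun y => -(I * curv A1 A2 y * u y)) x =
      -(1 / (ε : ℂ) ^ 2) * (D1 A1 u x * conj (u x)) * u x
        - I * curv A1 A2 x * D2 A2 u x + (hfun ε u x : ℂ) * D1 A1 u x) ∧
    (-(D2 A2 (fun y => D1 A1 (D1 A1 u) y + D2 A2 (D2 A2 u) y) x)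
        + D1 A1 (fun y => I * curv A1 A2 y * u y) x =
      -(1 / (ε : ℂ) ^ 2) * (D2 A2 u x * conj (u x)) * u x
        + I * curv A1 A2 x * D1 A1 u x + (hfun ε u x : ℂ) * D2 A2 u x) := by
  have hUx : U ∈ 𝓝 x := hU.mem_nhds hx
  have hux : DifferentiableAt ℝ u x := (hu.contDiffAt hUx).differentiableAt two_ne_zero
  have hFx : DifferentiableAt ℝ (curv A1 A2) x :=
    differentiableAt_curv (hA1.contDiffAt hUx) (hA2.contDiffAt hUx)
  have D2_curv_mul : D2 A2 (fun y => -(I * curv A1 A2 y * u y)) x =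
      -(I * pd2 (curv A1 A2) x * u x + I * curv A1 A2 x * D2 A2 u x) := by
    rw [D2_eq_covDeriv, covDeriv_neg, covDeriv_const_mul_ofReal_mul I hFx hux, pd2]
  have D1_curv_mul : D1 A1 (fun y => I * curv A1 A2 y * u y) x =
      I * pd1 (curv A1 A2) x * u x + I * curv A1 A2 x * D1 A1 u x :=
    covDeriv_const_mul_ofReal_mul I hFx hux
  have laplacian₁ := hYMH.neg_covDeriv_laplacian hUx hux A1 (1, 0)
  have laplacian₂ := hYMH.neg_covDeriv_laplacian hUx hux A2 (0, 1)
  rw [← D1_eq_covDeriv] at laplacian₁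
  rw [← D2_eq_covDeriv] at laplacian₂
  rw [laplacian₁, laplacian₂, D1_curv_mul, D2_curv_mul, hYMH.pd1_curv hε hx, hYMH.pd2_curv hε hx]
  push_cast
  constructor
  · linear_combination -(1 / (ε : ℂ) ^ 2) * u x * re_add_im (conj (u x) * D1 A1 u x)
  · linear_combination -(1 / (ε : ℂ) ^ 2) * u x * re_add_im (conj (u x) * D2 A2 u x)

end YangMillsHiggs

/-- Identity for the covariant derivative of a solution (Proposition 3.4(c),
trivialized flat version): the twisted Hodge Laplacian applied to `d_Au = (D₁u, D₂u)`. -/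
theorem twisted_laplacian_of_dAu
    (ε : ℝ) (hε : 0 < ε) (U : Set (ℝ × ℝ)) (hU : IsOpen U)
    (u : ℝ × ℝ → ℂ) (A1 A2 : ℝ × ℝ → ℝ)
    (hu : ContDiffOn ℝ (⊤ : ℕ∞) u U) (hA1 : ContDiffOn ℝ (⊤ : ℕ∞) A1 U) (hA2 : ContDiffOn ℝ (⊤ : ℕ∞) A2 U)
    (hYMH : IsYMHOn ε u A1 A2 U) :
    ∀ x ∈ U,
      (-(D1 A1 (fun y => D1 A1 (D1 A1 u) y + D2 A2 (D2 A2 u) y) x)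
          + D2 A2 (fun y => -(Complex.I * curv A1 A2 y * u y)) x =
        -(1 / (ε : ℂ) ^ 2) * (D1 A1 u x * (starRingEnd ℂ) (u x)) * u x
          - Complex.I * curv A1 A2 x * D2 A2 u x + (hfun ε u x : ℂ) * D1 A1 u x) ∧
      (-(D2 A2 (fun y => D1 A1 (D1 A1 u) y + D2 A2 (D2 A2 u) y) x)
          + D1 A1 (fun y => Complex.I * curv A1 A2 y * u y) x =
        -(1 / (ε : ℂ) ^ 2) * (D2 A2 u x * (starRingEnd ℂ) (u x)) * u x
          + Complex.I * curv A1 A2 x * D1 A1 u x + (hfun ε u x : ℂ) * D2 A2 u x) := by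
  have two_le : (2 : WithTop ℕ∞) ≤ (⊤ : ℕ∞) := WithTop.coe_le_coe.2 le_top
  exact fun x hx => twisted_laplacian_of_dAu_general hε.ne' hU (hu.of_le two_le)
    (hA1.of_le two_le) (hA2.of_le two_le) hYMH hx
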